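/- There exists a constant C > 0, depending only on α and β, with the following property. Let (u_k, λ_k, f_k) be a sequence of real Dirichlet quasimode data on the stadium S with ‖u_k‖_{L²(S)} = 1 for all k, λ_k → ∞, and ‖f_k‖_{L²(S)} → 0 (an o(1) quasimode). Then for all sufficiently large k, ∫_{∂S ∩ W} w |∂_N u_k|² dl ≥ C. -/

import Mathlib

open MeasureTheory Real Set Filter

noncomputable section

/-- Partial derivative in the first (x) variable. -/
def pdx (u : ℝ × ℝ → ℝ) (p : ℝ × ℝ) : ℝ := deriv (fun t => u (t, p.2)) p.1

/-- Partial derivative in the second (y) variable. -/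
def pdy (u : ℝ × ℝ → ℝ) (p : ℝ × ℝ) : ℝ := deriv (fun t => u (p.1, t)) p.2

/-- The positive Laplacian `Δu = -u_xx - u_yy`. -/
def lap (u : ℝ × ℝ → ℝ) (p : ℝ × ℝ) : ℝ := -(pdx (pdx u) p) - (pdy (pdy u) p)

/-- The central rectangle `R = [-α,α] × [-β,β]`. -/
def Rect (α β : ℝ) : Set (ℝ × ℝ) := Icc (-α) α ×ˢ Icc (-β) β

/-- The wings `W = W₊ ∪ W₋`, two half-discs of radius β centered at `(±α, 0)`. -/
def Wings (α β : ℝ) : Set (ℝ × ℝ) :=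
  {p | (p.1 - α) ^ 2 + p.2 ^ 2 ≤ β ^ 2 ∧ α ≤ p.1} ∪
  {p | (p.1 + α) ^ 2 + p.2 ^ 2 ≤ β ^ 2 ∧ p.1 ≤ -α}

/-- The Bunimovich stadium `S = R ∪ W`. -/
def Stadium (α β : ℝ) : Set (ℝ × ℝ) := Rect α β ∪ Wings α β

/-- The boundary `∂S`: two horizontal segments and two semicircles. -/
def StadiumBoundary (α β : ℝ) : Set (ℝ × ℝ) :=
  {p | |p.1| ≤ α ∧ (p.2 = β ∨ p.2 = -β)} ∪
  {p | (|p.1| - α) ^ 2 + p.2 ^ 2 = β ^ 2 ∧ α ≤ |p.1|}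

/-- Boundary integral `∫_{∂S} g dl` of an integrand `g` depending on the boundary point
and the outward unit normal at that point. -/
def bdryInt (α β : ℝ) (g : ℝ × ℝ → ℝ × ℝ → ℝ) : ℝ :=
  (∫ x in (-α)..α, (g (x, β) (0, 1) + g (x, -β) (0, -1))) +
  β * ∫ θ in (-(π / 2))..(π / 2),
    (g (α + β * cos θ, β * sin θ) (cos θ, sin θ) +
     g (-(α + β * cos θ), β * sin θ) (-cos θ, sin θ))

/-- Boundary integral `∫_{∂S ∩ W} g dl` over the two semicircles only. -/
def bdryIntW (α β : ℝ) (g : ℝ × ℝ → ℝ × ℝ → ℝ) : ℝ :=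
  β * ∫ θ in (-(π / 2))..(π / 2),
    (g (α + β * cos θ, β * sin θ) (cos θ, sin θ) +
     g (-(α + β * cos θ), β * sin θ) (-cos θ, sin θ))

/-- The normal derivative `∂_N u = n₁ ∂_x u + n₂ ∂_y u` at a boundary point `p`
with outward unit normal `n`. -/
def nderiv (u : ℝ × ℝ → ℝ) (p n : ℝ × ℝ) : ℝ := n.1 * pdx u p + n.2 * pdy u p

/-- A real Dirichlet quasimode datum `(u, λ, f)` on the stadium: `λ > 0`, `u` smooth on a
neighborhood of `S`, `u = 0` on `∂S`, and `(Δ - λ²) u = f` on `S`. -/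
structure QMDatum (α β : ℝ) where
  u : ℝ × ℝ → ℝ
  lam : ℝ
  f : ℝ × ℝ → ℝ
  lam_pos : 0 < lam
  smooth : ∃ V : Set (ℝ × ℝ), IsOpen V ∧ Stadium α β ⊆ V ∧ ContDiffOn ℝ (⊤ : ℕ∞) u V
  dirichlet : ∀ p ∈ StadiumBoundary α β, u p = 0
  eqn : ∀ p ∈ Stadium α β, lap u p - lam ^ 2 * u p = f p

lemma pdx_hasDerivAt {v : ℝ × ℝ → ℝ} (hv : ContDiff ℝ (⊤ : ℕ∞) v) (x y : ℝ) :
    HasDerivAt (fun t => v (t, y)) (pdx v (x, y)) x := by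
  have h1 : DifferentiableAt ℝ (fun t : ℝ => v (t, y)) x := by
    have : ContDiff ℝ (⊤ : ℕ∞) (fun t : ℝ => v (t, y)) := by fun_prop
    exact this.differentiable (by simp) x
  exact h1.hasDerivAt

lemma pdy_hasDerivAt {v : ℝ × ℝ → ℝ} (hv : ContDiff ℝ (⊤ : ℕ∞) v) (x y : ℝ) :
    HasDerivAt (fun t => v (x, t)) (pdy v (x, y)) y := by
  have h1 : DifferentiableAt ℝ (fun t : ℝ => v (x, t)) y := by
    have : ContDiff ℝ (⊤ : ℕ∞) (fun t : ℝ => v (x, t)) := by fun_prop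
    exact this.differentiable (by simp) y
  exact h1.hasDerivAt

lemma pdx_eq {v : ℝ × ℝ → ℝ} (hv : ContDiff ℝ (⊤ : ℕ∞) v) :
    pdx v = fun p => fderiv ℝ v p (1, 0) := by
  funext p
  have h := (hv.differentiable (by simp) p).hasFDerivAt
  have h2 : HasDerivAt (fun t : ℝ => ((t, p.2) : ℝ × ℝ)) (1, 0) p.1 :=
    (hasDerivAt_id _).prodMk (hasDerivAt_const _ _)
  exact (HasFDerivAt.comp_hasDerivAt (f := fun t : ℝ => ((t, p.2) : ℝ × ℝ)) p.1 h h2).deriv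

lemma pdy_eq {v : ℝ × ℝ → ℝ} (hv : ContDiff ℝ (⊤ : ℕ∞) v) :
    pdy v = fun p => fderiv ℝ v p (0, 1) := by
  funext p
  have h := (hv.differentiable (by simp) p).hasFDerivAt
  have h2 : HasDerivAt (fun t : ℝ => ((p.1, t) : ℝ × ℝ)) (0, 1) p.2 :=
    (hasDerivAt_const _ _).prodMk (hasDerivAt_id _)
  exact (HasFDerivAt.comp_hasDerivAt (f := fun t : ℝ => ((p.1, t) : ℝ × ℝ)) p.2 h h2).deriv

lemma pdx_smooth {v : ℝ × ℝ → ℝ} (hv : ContDiff ℝ (⊤ : ℕ∞) v) :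
    ContDiff ℝ (⊤ : ℕ∞) (pdx v) := by
  rw [pdx_eq hv]
  exact (hv.fderiv_right (m := (⊤ : ℕ∞)) (by simp)).clm_apply contDiff_const

lemma pdy_smooth {v : ℝ × ℝ → ℝ} (hv : ContDiff ℝ (⊤ : ℕ∞) v) :
    ContDiff ℝ (⊤ : ℕ∞) (pdy v) := by
  rw [pdy_eq hv]
  exact (hv.fderiv_right (m := (⊤ : ℕ∞)) (by simp)).clm_apply contDiff_const

lemma pd_comm {v : ℝ × ℝ → ℝ} (hv : ContDiff ℝ (⊤ : ℕ∞) v) (p : ℝ × ℝ) :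
    pdx (pdy v) p = pdy (pdx v) p := by
  rw [pdx_eq (pdy_smooth hv), pdy_eq (pdx_smooth hv), pdx_eq hv, pdy_eq hv]
  have hd : DifferentiableAt ℝ (fderiv ℝ v) p :=
    (hv.fderiv_right (m := (⊤ : ℕ∞)) (by simp)).differentiable (by simp) p
  have hs : IsSymmSndFDerivAt ℝ v p :=
    hv.contDiffAt.isSymmSndFDerivAt (by
      simp only [minSmoothness_of_isRCLikeNormedField]
      exact WithTop.coe_le_coe.2 (le_top (a := (2 : ℕ∞))))
  have e := hs.eq (1, 0) (0, 1)
  simp only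
  rw [fderiv_clm_apply hd (by fun_prop), fderiv_clm_apply hd (by fun_prop)]
  simpa using e

lemma curve_deriv {v : ℝ × ℝ → ℝ} (hv : ContDiff ℝ (⊤ : ℕ∞) v) {a b : ℝ → ℝ} {a' b' t : ℝ}
    (ha : HasDerivAt a a' t) (hb : HasDerivAt b b' t) :
    HasDerivAt (fun s => v (a s, b s)) (a' * pdx v (a t, b t) + b' * pdy v (a t, b t)) t := by
  have h := (hv.differentiable (by simp) (a t, b t)).hasFDerivAt
  have h3 := HasFDerivAt.comp_hasDerivAt (f := fun s : ℝ => ((a s, b s) : ℝ × ℝ)) t h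
    (ha.prodMk hb)
  rw [pdx_eq hv, pdy_eq hv]
  have e : ((a', b') : ℝ × ℝ) = a' • ((1, 0) : ℝ × ℝ) + b' • ((0, 1) : ℝ × ℝ) := by simp
  rw [e, map_add, map_smul, map_smul] at h3
  exact h3

lemma deriv_zero_of_Icc {g : ℝ → ℝ} {a b t c : ℝ} (hab : a < b) (ht : t ∈ Icc a b)
    (hz : ∀ s ∈ Icc a b, g s = 0) (hg : HasDerivAt g c t) : c = 0 := by
  have h1 : HasDerivWithinAt g c (Icc a b) t := hg.hasDerivWithinAt
  have h2 : HasDerivWithinAt g 0 (Icc a b) t :=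
    (hasDerivWithinAt_const t (Icc a b) (0:ℝ)).congr hz (hz t ht)
  exact (uniqueDiffOn_Icc hab t ht).eq_deriv _ h1 h2

/-- half width -/
def lw (α β y : ℝ) : ℝ := α + √(β ^ 2 - y ^ 2)
/-- half height -/
def hh (α β x : ℝ) : ℝ := √(β ^ 2 - (max (|x| - α) 0) ^ 2)

lemma mem_stadium_lw {α β : ℝ} (hα : 0 < α) (hβ : 0 < β) (x y : ℝ) :
    (x, y) ∈ Stadium α β ↔ y ∈ Icc (-β) β ∧ x ∈ Icc (-lw α β y) (lw α β y) := by
  simp only [Stadium, Rect, Wings, mem_union, mem_prod, mem_Icc, mem_ofPred_eq, lw]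
  constructor
  · rintro (⟨⟨h1, h2⟩, h3, h4⟩ | ⟨h1, h2⟩ | ⟨h1, h2⟩)
    · have := Real.sqrt_nonneg (β ^ 2 - y ^ 2)
      exact ⟨⟨h3, h4⟩, by linarith, by linarith⟩
    · have h5 : |y| ≤ β := abs_le_of_sq_le_sq (by nlinarith [sq_nonneg (x - α)]) hβ.le
      have h6 : x - α ≤ √(β ^ 2 - y ^ 2) := Real.le_sqrt_of_sq_le (by linarith)
      exact ⟨abs_le.1 h5, by linarith, by linarith⟩
    · have h5 : |y| ≤ β := abs_le_of_sq_le_sq (by nlinarith [sq_nonneg (x + α)]) hβ.le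
      have h6 : -(x + α) ≤ √(β ^ 2 - y ^ 2) := Real.le_sqrt_of_sq_le (by linarith [neg_sq (x+α)])
      exact ⟨abs_le.1 h5, by linarith, by linarith⟩
  · rintro ⟨⟨h1, h2⟩, h3, h4⟩
    have hn : 0 ≤ β ^ 2 - y ^ 2 := by nlinarith
    have hsq := Real.sq_sqrt hn
    have hs0 := Real.sqrt_nonneg (β ^ 2 - y ^ 2)
    rcases le_or_gt x α with hx | hx
    · rcases le_or_gt (-α) x with hx' | hx'
      · exact Or.inl ⟨⟨hx', hx⟩, h1, h2⟩
      · refine Or.inr (Or.inr ⟨?_, hx'.le⟩)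
        nlinarith
    · refine Or.inr (Or.inl ⟨?_, hx.le⟩)
      nlinarith

lemma mem_stadium_hh {α β : ℝ} (hα : 0 < α) (hβ : 0 < β) (x y : ℝ) :
    (x, y) ∈ Stadium α β ↔
      x ∈ Icc (-(α + β)) (α + β) ∧ y ∈ Icc (-hh α β x) (hh α β x) := by
  have key : (x, y) ∈ Stadium α β ↔ |y| ≤ β ∧ (max (|x| - α) 0) ^ 2 + y ^ 2 ≤ β ^ 2 := by
    rw [mem_stadium_lw hα hβ, mem_Icc, mem_Icc, ← abs_le, ← abs_le, lw]
    refine and_congr_right fun hy => ?_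
    have hn : 0 ≤ β ^ 2 - y ^ 2 := by nlinarith [abs_nonneg y, sq_abs y]
    rw [show |x| ≤ α + √(β ^ 2 - y ^ 2) ↔ max (|x| - α) 0 ≤ √(β ^ 2 - y ^ 2) by
      simp only [max_le_iff, Real.sqrt_nonneg, and_true]; constructor <;> intro h <;> linarith]
    rw [Real.le_sqrt (le_max_right _ _) hn]
    constructor <;> intro h <;> linarith
  rw [key, mem_Icc, mem_Icc, ← abs_le, ← abs_le, hh]
  have m0 := le_max_right (|x| - α) 0
  have m1 := le_max_left (|x| - α) 0
  constructor
  · rintro ⟨h1, h2⟩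
    refine ⟨?_, Real.le_sqrt_of_sq_le (by rw [sq_abs]; linarith)⟩
    have : max (|x| - α) 0 ≤ β := abs_le_of_sq_le_sq' (by nlinarith) hβ.le |>.2
    linarith
  · rintro ⟨h1, h2⟩
    have h3 : max (|x| - α) 0 ≤ β := max_le (by linarith) hβ.le
    have hn : 0 ≤ β ^ 2 - (max (|x| - α) 0) ^ 2 := by nlinarith
    have h4 := (Real.le_sqrt (abs_nonneg y) hn).1 h2
    rw [sq_abs] at h4
    refine ⟨?_, by linarith⟩
    exact abs_le_of_sq_le_sq (by nlinarith) hβ.le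

lemma stadium_compact {α β : ℝ} (hα : 0 < α) (hβ : 0 < β) : IsCompact (Stadium α β) := by
  have hc : IsClosed (Stadium α β) := by
    unfold Stadium Rect Wings
    refine (isClosed_Icc.prod isClosed_Icc).union (IsClosed.union ?_ ?_)
    · have h1 : IsClosed {p : ℝ × ℝ | (p.1 - α) ^ 2 + p.2 ^ 2 ≤ β ^ 2} :=
        isClosed_le (by fun_prop) (by fun_prop)
      have h2 : IsClosed {p : ℝ × ℝ | α ≤ p.1} := isClosed_le (by fun_prop) (by fun_prop)
      exact h1.inter h2
    · have h1 : IsClosed {p : ℝ × ℝ | (p.1 + α) ^ 2 + p.2 ^ 2 ≤ β ^ 2} :=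
        isClosed_le (by fun_prop) (by fun_prop)
      have h2 : IsClosed {p : ℝ × ℝ | p.1 ≤ -α} := isClosed_le (by fun_prop) (by fun_prop)
      exact h1.inter h2
  refine IsCompact.of_isClosed_subset
    ((isCompact_Icc (a := -(α + β)) (b := α + β)).prod (isCompact_Icc (a := -β) (b := β))) hc ?_
  rintro ⟨x, y⟩ h
  exact ⟨((mem_stadium_hh hα hβ x y).1 h).1, ((mem_stadium_lw hα hβ x y).1 h).1⟩

lemma slice_x {α β : ℝ} (hα : 0 < α) (hβ : 0 < β) {F : ℝ × ℝ → ℝ} (hF : Continuous F) :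
    ∫ p in Stadium α β, F p = ∫ y in (-β)..β, ∫ x in (-lw α β y)..(lw α β y), F (x, y) := by
  have hS := stadium_compact hα hβ
  have hm := hS.isClosed.measurableSet
  have hi : Integrable ((Stadium α β).indicator F) :=
    (integrable_indicator_iff hm).2 (hF.continuousOn.integrableOn_compact hS)
  rw [← integral_indicator hm, Measure.volume_eq_prod, integral_prod_symm _ hi,
    intervalIntegral.integral_of_le (by linarith), ← integral_Icc_eq_integral_Ioc,
    ← integral_indicator measurableSet_Icc]
  congr 1
  funext y
  by_cases hy : y ∈ Icc (-β) β
  · have hl : 0 ≤ lw α β y := add_nonneg hα.le (Real.sqrt_nonneg _)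
    rw [indicator_of_mem hy, intervalIntegral.integral_of_le (by linarith),
      ← integral_Icc_eq_integral_Ioc, ← integral_indicator measurableSet_Icc]
    congr 1
    funext x
    simp only [indicator, mem_stadium_lw hα hβ, hy, true_and]
  · rw [indicator_of_notMem hy]
    simp only [indicator, mem_stadium_lw hα hβ, hy, false_and, if_false, integral_zero]

lemma slice_y {α β : ℝ} (hα : 0 < α) (hβ : 0 < β) {F : ℝ × ℝ → ℝ} (hF : Continuous F) :
    ∫ p in Stadium α β, F p =
      ∫ x in (-(α + β))..(α + β), ∫ y in (-hh α β x)..(hh α β x), F (x, y) := by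
  have hS := stadium_compact hα hβ
  have hm := hS.isClosed.measurableSet
  have hi : Integrable ((Stadium α β).indicator F) :=
    (integrable_indicator_iff hm).2 (hF.continuousOn.integrableOn_compact hS)
  rw [← integral_indicator hm, Measure.volume_eq_prod, integral_prod _ hi,
    intervalIntegral.integral_of_le (by linarith), ← integral_Icc_eq_integral_Ioc,
    ← integral_indicator measurableSet_Icc]
  congr 1
  funext x
  by_cases hx : x ∈ Icc (-(α + β)) (α + β)
  · have hl : 0 ≤ hh α β x := Real.sqrt_nonneg _
    rw [indicator_of_mem hx, intervalIntegral.integral_of_le (by linarith),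
      ← integral_Icc_eq_integral_Ioc, ← integral_indicator measurableSet_Icc]
    congr 1
    funext y
    simp only [indicator, mem_stadium_hh hα hβ, hx, true_and]
  · rw [indicator_of_notMem hx]
    simp only [indicator, mem_stadium_hh hα hβ, hx, false_and, if_false, integral_zero]

lemma lw_sin {α β θ : ℝ} (hβ : 0 < β) (hθ : θ ∈ Icc (-(π / 2)) (π / 2)) :
    lw α β (β * sin θ) = α + β * cos θ := by
  have hc := cos_nonneg_of_mem_Icc hθ
  rw [lw, show β ^ 2 - (β * sin θ) ^ 2 = (β * cos θ) ^ 2 by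
    have := sin_sq_add_cos_sq θ
    linear_combination β ^ 2 * (-this), Real.sqrt_sq (by positivity)]

lemma hh_flat {α β x : ℝ} (hβ : 0 < β) (hx : |x| ≤ α) : hh α β x = β := by
  rw [hh, max_eq_right (by linarith)]
  simp [Real.sqrt_sq hβ.le]

lemma hh_neg (α β x : ℝ) : hh α β (-x) = hh α β x := by simp [hh]

lemma hh_cos {α β θ : ℝ} (hα : 0 < α) (hβ : 0 < β) (hθ : θ ∈ Icc (-(π / 2)) (π / 2)) :
    hh α β (α + β * cos θ) = β * |sin θ| := by
  have hc := cos_nonneg_of_mem_Icc hθ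
  have h1 : 0 ≤ β * cos θ := by positivity
  rw [hh, abs_of_nonneg (by linarith), show α + β * cos θ - α = β * cos θ by ring,
    max_eq_left h1, show β ^ 2 - (β * cos θ) ^ 2 = (β * |sin θ|) ^ 2 by
    have := sin_sq_add_cos_sq θ
    rw [mul_pow, mul_pow, sq_abs]
    linear_combination β ^ 2 * (-this), Real.sqrt_sq (by positivity)]

lemma continuous_lw (α β : ℝ) : Continuous (lw α β) := by unfold lw; fun_prop
lemma continuous_hh (α β : ℝ) : Continuous (hh α β) := by unfold hh; fun_prop

lemma div_x {α β : ℝ} (hα : 0 < α) (hβ : 0 < β) {P : ℝ × ℝ → ℝ}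
    (hP : ContDiff ℝ (⊤ : ℕ∞) P) :
    ∫ p in Stadium α β, pdx P p = ∫ θ in (-(π / 2))..(π / 2),
      (P (α + β * cos θ, β * sin θ) - P (-(α + β * cos θ), β * sin θ)) * (β * cos θ) := by
  have hc := hP.continuous
  have hxc := (pdx_smooth hP).continuous
  have hl := continuous_lw α β
  rw [slice_x hα hβ hxc]
  have h1 : ∀ y, ∫ x in (-lw α β y)..(lw α β y), pdx P (x, y) =
      P (lw α β y, y) - P (-lw α β y, y) := fun y =>
    intervalIntegral.integral_eq_sub_of_hasDerivAt (fun x _ => pdx_hasDerivAt hP x y)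
      (Continuous.intervalIntegrable (by fun_prop) _ _)
  simp_rw [h1]
  have h2 := intervalIntegral.integral_comp_mul_deriv (a := -(π / 2)) (b := π / 2)
    (f := fun θ => β * sin θ) (f' := fun θ => β * cos θ)
    (g := fun y => P (lw α β y, y) - P (-lw α β y, y))
    (fun θ _ => (hasDerivAt_sin θ).const_mul β) (by fun_prop) (by fun_prop)
  simp only [sin_neg, sin_pi_div_two, mul_neg, mul_one] at h2
  rw [← h2]
  apply intervalIntegral.integral_congr
  intro θ hθ
  rw [uIcc_of_le (by linarith [pi_pos])] at hθ
  simp only [Function.comp, lw_sin hβ hθ]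

lemma arc {α β : ℝ} (hα : 0 < α) (hβ : 0 < β) {Q : ℝ × ℝ → ℝ} (hc : Continuous Q) :
    ∫ x in α..(α + β), (Q (x, hh α β x) - Q (x, -hh α β x)) =
      ∫ θ in (-(π / 2))..(π / 2), Q (α + β * cos θ, β * sin θ) * (β * sin θ) := by
  have hl := continuous_hh α β
  have hpi := pi_pos
  have hd : ∀ θ : ℝ, HasDerivAt (fun θ => α + β * cos θ) (-(β * sin θ)) θ := fun θ => by
    simpa using ((hasDerivAt_cos θ).const_mul β).const_add α
  have h2 := intervalIntegral.integral_comp_mul_deriv (a := 0) (b := π / 2)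
    (f := fun θ => α + β * cos θ) (f' := fun θ => -(β * sin θ))
    (g := fun x => Q (x, hh α β x))
    (fun θ _ => hd θ) (by fun_prop) (by fun_prop)
  have h3 := intervalIntegral.integral_comp_mul_deriv (a := -(π / 2)) (b := 0)
    (f := fun θ => α + β * cos θ) (f' := fun θ => -(β * sin θ))
    (g := fun x => Q (x, -hh α β x))
    (fun θ _ => hd θ) (by fun_prop) (by fun_prop)
  simp only [cos_neg, cos_pi_div_two, cos_zero, mul_zero, mul_one, add_zero] at h2 h3
  rw [intervalIntegral.integral_sub (Continuous.intervalIntegrable (by fun_prop) _ _)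
    (Continuous.intervalIntegrable (by fun_prop) _ _), ← h3,
    intervalIntegral.integral_symm, ← h2]
  have hsplit := intervalIntegral.integral_add_adjacent_intervals
    (μ := volume) (a := -(π / 2)) (b := 0) (c := π / 2)
    (f := fun θ => Q (α + β * cos θ, β * sin θ) * (β * sin θ))
    (Continuous.intervalIntegrable (by fun_prop) _ _)
    (Continuous.intervalIntegrable (by fun_prop) _ _)
  have e2 : (∫ θ in (0:ℝ)..(π / 2), ((fun x => Q (x, hh α β x)) ∘ fun θ => α + β * cos θ) θ *
      -(β * sin θ)) = -∫ θ in (0:ℝ)..(π / 2), Q (α + β * cos θ, β * sin θ) * (β * sin θ) := by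
    rw [← intervalIntegral.integral_neg]
    apply intervalIntegral.integral_congr
    intro θ hθ
    rw [uIcc_of_le (by linarith)] at hθ
    have hs : 0 ≤ sin θ := sin_nonneg_of_nonneg_of_le_pi hθ.1 (by linarith [hθ.2])
    simp only [Function.comp, hh_cos hα hβ ⟨by linarith [hθ.1], hθ.2⟩, abs_of_nonneg hs]
    ring
  have e3 : (∫ θ in (-(π / 2))..(0:ℝ),
      ((fun x => Q (x, -hh α β x)) ∘ fun θ => α + β * cos θ) θ *
      -(β * sin θ)) = -∫ θ in (-(π / 2))..(0:ℝ),
        Q (α + β * cos θ, β * sin θ) * (β * sin θ) := by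
    rw [← intervalIntegral.integral_neg]
    apply intervalIntegral.integral_congr
    intro θ hθ
    rw [uIcc_of_le (by linarith)] at hθ
    have hs : sin θ ≤ 0 := sin_nonpos_of_nonpos_of_neg_pi_le hθ.2 (by linarith [hθ.1])
    simp only [Function.comp, hh_cos hα hβ ⟨hθ.1, by linarith [hθ.2]⟩, abs_of_nonpos hs]
    rw [show -(β * -sin θ) = β * sin θ by ring]
    ring
  rw [e2, e3]
  linarith

lemma div_y {α β : ℝ} (hα : 0 < α) (hβ : 0 < β) {Q : ℝ × ℝ → ℝ}
    (hQ : ContDiff ℝ (⊤ : ℕ∞) Q)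
    (h0 : ∀ x ∈ Icc (-α) α, Q (x, β) = 0 ∧ Q (x, -β) = 0) :
    ∫ p in Stadium α β, pdy Q p = ∫ θ in (-(π / 2))..(π / 2),
      (Q (α + β * cos θ, β * sin θ) + Q (-(α + β * cos θ), β * sin θ)) * (β * sin θ) := by
  have hc := hQ.continuous
  have hyc := (pdy_smooth hQ).continuous
  have hl := continuous_hh α β
  rw [slice_y hα hβ hyc]
  have h1 : ∀ x, ∫ y in (-hh α β x)..(hh α β x), pdy Q (x, y) =
      Q (x, hh α β x) - Q (x, -hh α β x) := fun x =>
    intervalIntegral.integral_eq_sub_of_hasDerivAt (fun y _ => pdy_hasDerivAt hQ x y)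
      (Continuous.intervalIntegrable (by fun_prop) _ _)
  simp_rw [h1]
  have hI : ∀ a b : ℝ, IntervalIntegrable (fun x => Q (x, hh α β x) - Q (x, -hh α β x))
      volume a b := fun a b => Continuous.intervalIntegrable (by fun_prop) _ _
  rw [← intervalIntegral.integral_add_adjacent_intervals (hI _ α) (hI _ _),
    ← intervalIntegral.integral_add_adjacent_intervals (hI _ (-α)) (hI _ _), arc hα hβ hc]
  have hmid : ∫ x in (-α)..α, (Q (x, hh α β x) - Q (x, -hh α β x)) = 0 := by
    rw [intervalIntegral.integral_congr (g := fun _ => (0:ℝ))]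
    · simp
    intro x hx
    rw [uIcc_of_le (by linarith)] at hx
    simp [hh_flat hβ (abs_le.2 hx), h0 x hx]
  have hleft : ∫ x in (-(α + β))..(-α), (Q (x, hh α β x) - Q (x, -hh α β x)) =
      ∫ θ in (-(π / 2))..(π / 2), Q (-(α + β * cos θ), β * sin θ) * (β * sin θ) := by
    rw [← arc (Q := fun p => Q (-p.1, p.2)) hα hβ (by fun_prop)]
    rw [← intervalIntegral.integral_comp_neg]
    simp only [hh_neg]
  rw [hmid, hleft, add_zero, ← intervalIntegral.integral_add
    (Continuous.intervalIntegrable (by fun_prop) _ _)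
    (Continuous.intervalIntegrable (by fun_prop) _ _)]
  apply intervalIntegral.integral_congr
  intro θ _
  simp only
  ring

lemma intS {α β : ℝ} (hα : 0 < α) (hβ : 0 < β) {F : ℝ × ℝ → ℝ} (hF : Continuous F) :
    IntegrableOn F (Stadium α β) :=
  hF.continuousOn.integrableOn_compact (stadium_compact hα hβ)

lemma bdry_right {α β θ : ℝ} (hα : 0 < α) (hβ : 0 < β) (hθ : θ ∈ Icc (-(π / 2)) (π / 2)) :
    (α + β * cos θ, β * sin θ) ∈ StadiumBoundary α β := by
  have hc := cos_nonneg_of_mem_Icc hθ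
  have h1 : 0 ≤ β * cos θ := by positivity
  refine Or.inr ⟨?_, ?_⟩
  · simp only
    rw [abs_of_nonneg (by linarith)]
    linear_combination β ^ 2 * sin_sq_add_cos_sq θ
  · simp only
    rw [abs_of_nonneg (by linarith)]
    linarith

lemma bdry_left {α β θ : ℝ} (hα : 0 < α) (hβ : 0 < β) (hθ : θ ∈ Icc (-(π / 2)) (π / 2)) :
    (-(α + β * cos θ), β * sin θ) ∈ StadiumBoundary α β := by
  have := bdry_right hα hβ hθ
  simpa only [StadiumBoundary, mem_union, mem_ofPred_eq, abs_neg] using this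

lemma poincare {α β : ℝ} (hα : 0 < α) (hβ : 0 < β) {v : ℝ × ℝ → ℝ}
    (hv : ContDiff ℝ (⊤ : ℕ∞) v) (hD : ∀ p ∈ StadiumBoundary α β, v p = 0) :
    ∫ p in Stadium α β, (v p) ^ 2 ≤
      4 * (α + β) ^ 2 * ∫ p in Stadium α β, (pdx v p) ^ 2 := by
  have hvc := hv.continuous
  have hac := (pdx_smooth hv).continuous
  have h := div_x hα hβ (P := fun p => p.1 * (v p) ^ 2) (by fun_prop)
  have hR : (∫ θ in (-(π / 2))..(π / 2),
      ((fun p : ℝ × ℝ => p.1 * (v p) ^ 2) (α + β * cos θ, β * sin θ) -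
        (fun p : ℝ × ℝ => p.1 * (v p) ^ 2) (-(α + β * cos θ), β * sin θ)) * (β * cos θ)) = 0 := by
    rw [intervalIntegral.integral_congr (g := fun _ => (0:ℝ))]
    · simp
    intro θ hθ
    rw [uIcc_of_le (by linarith [pi_pos])] at hθ
    simp only [hD _ (bdry_right hα hβ hθ), hD _ (bdry_left hα hβ hθ)]
    ring
  rw [hR] at h
  have hp : ∀ p : ℝ × ℝ, pdx (fun p => p.1 * (v p) ^ 2) p =
      (v p) ^ 2 + 2 * p.1 * v p * pdx v p := by
    rintro ⟨x, y⟩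
    have := (hasDerivAt_id x).mul ((pdx_hasDerivAt hv x y).pow 2)
    refine (this.deriv).trans ?_
    simp
    ring
  simp_rw [hp] at h
  have hle : ∫ p in Stadium α β, (1 / 2 * (v p) ^ 2 - 2 * (α + β) ^ 2 * (pdx v p) ^ 2) ≤
      ∫ p in Stadium α β, ((v p) ^ 2 + 2 * p.1 * v p * pdx v p) := by
    apply setIntegral_mono_on (intS hα hβ (by fun_prop)) (intS hα hβ (by fun_prop))
      (stadium_compact hα hβ).isClosed.measurableSet
    rintro ⟨x, y⟩ hxy
    have hx := ((mem_stadium_hh hα hβ x y).1 hxy).1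
    have hx2 : x ^ 2 ≤ (α + β) ^ 2 := sq_le_sq' hx.1 hx.2
    simp only
    nlinarith [sq_nonneg (v (x, y) + 2 * x * pdx v (x, y)),
      mul_le_mul_of_nonneg_right hx2 (sq_nonneg (pdx v (x, y)))]
  rw [h, integral_sub (intS hα hβ (by fun_prop)) (intS hα hβ (by fun_prop)),
    integral_const_mul, integral_const_mul] at hle
  linarith

/-- The Rellich identity. -/
lemma rellich {α β l : ℝ} (hα : 0 < α) (hβ : 0 < β) {v : ℝ × ℝ → ℝ}
    (hv : ContDiff ℝ (⊤ : ℕ∞) v) (hD : ∀ p ∈ StadiumBoundary α β, v p = 0) :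
    ∫ p in Stadium α β, (pdx v p) ^ 2 =
      (∫ p in Stadium α β, (lap v p - l ^ 2 * v p) * (p.1 * pdx v p + 1 / 2 * v p)) +
      1 / 2 * ∫ θ in (-(π / 2))..(π / 2), β * (α + β * cos θ) * cos θ *
        ((nderiv v (α + β * cos θ, β * sin θ) (cos θ, sin θ)) ^ 2 +
         (nderiv v (-(α + β * cos θ), β * sin θ) (-cos θ, sin θ)) ^ 2) := by
  have ha := pdx_smooth hv
  have hb := pdy_smooth hv
  have hvc := hv.continuous
  have hac := ha.continuous
  have hbc := hb.continuous
  have haac := (pdx_smooth ha).continuous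
  have hbbc := (pdy_smooth hb).continuous
  have hpi := pi_pos
  let P : ℝ × ℝ → ℝ := fun p => 1 / 2 * (p.1 * ((pdy v p) ^ 2 - (pdx v p) ^ 2 - l ^ 2 * (v p) ^ 2)
    - v p * pdx v p)
  let Q : ℝ × ℝ → ℝ := fun p => -(p.1 * (pdx v p * pdy v p)) - 1 / 2 * (v p * pdy v p)
  have hP : ContDiff ℝ (⊤ : ℕ∞) P := by fun_prop
  have hQ : ContDiff ℝ (⊤ : ℕ∞) Q := by fun_prop
  have hPx : ∀ p, pdx P p = 1 / 2 * (((pdy v p) ^ 2 - (pdx v p) ^ 2 - l ^ 2 * (v p) ^ 2) +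
      p.1 * (2 * pdy v p * pdx (pdy v) p - 2 * pdx v p * pdx (pdx v) p
        - l ^ 2 * (2 * v p * pdx v p)) - (pdx v p * pdx v p + v p * pdx (pdx v) p)) := by
    rintro ⟨x, y⟩
    have d0 := pdx_hasDerivAt hv x y
    have d1 := pdx_hasDerivAt ha x y
    have d2 := pdx_hasDerivAt hb x y
    have := (((hasDerivAt_id x).mul (((d2.pow 2).sub (d1.pow 2)).sub
      ((d0.pow 2).const_mul (l ^ 2)))).sub (d0.mul d1)).const_mul (1 / 2)
    refine (this.deriv).trans ?_
    simp
  have hQy : ∀ p, pdy Q p = -(p.1 * (pdy (pdx v) p * pdy v p + pdx v p * pdy (pdy v) p)) -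
      1 / 2 * (pdy v p * pdy v p + v p * pdy (pdy v) p) := by
    rintro ⟨x, y⟩
    have d0 := pdy_hasDerivAt hv x y
    have d1 := pdy_hasDerivAt ha x y
    have d2 := pdy_hasDerivAt hb x y
    have := (((d1.mul d2).const_mul x).neg).sub ((d0.mul d2).const_mul (1 / 2))
    exact this.deriv
  have hflat : ∀ x ∈ Icc (-α) α, Q (x, β) = 0 ∧ Q (x, -β) = 0 := by
    intro x hx
    have hz1 : ∀ s ∈ Icc (-α) α, v (s, β) = 0 := fun s hs =>
      hD _ (Or.inl ⟨abs_le.2 hs, Or.inl rfl⟩)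
    have hz2 : ∀ s ∈ Icc (-α) α, v (s, -β) = 0 := fun s hs =>
      hD _ (Or.inl ⟨abs_le.2 hs, Or.inr rfl⟩)
    have e1 := deriv_zero_of_Icc (by linarith) hx hz1 (pdx_hasDerivAt hv x β)
    have e2 := deriv_zero_of_Icc (by linarith) hx hz2 (pdx_hasDerivAt hv x (-β))
    simp [Q, e1, e2, hz1 x hx, hz2 x hx]
  have I1 := div_x hα hβ hP
  have I2 := div_y hα hβ hQ hflat
  have hPc := hP.continuous
  have hQc := hQ.continuous
  have I3 : (∫ p in Stadium α β, pdx P p) + (∫ p in Stadium α β, pdy Q p) =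
      (∫ p in Stadium α β, (lap v p - l ^ 2 * v p) * (p.1 * pdx v p + 1 / 2 * v p)) -
      ∫ p in Stadium α β, (pdx v p) ^ 2 := by
    have hlc : Continuous (lap v) := by unfold lap; fun_prop
    rw [← integral_add (intS hα hβ (pdx_smooth hP).continuous)
      (intS hα hβ (pdy_smooth hQ).continuous), ← integral_sub
      (intS hα hβ (by fun_prop)) (intS hα hβ (by fun_prop))]
    congr 1
    funext p
    rw [hPx, hQy, lap, pd_comm hv]
    ring
  rw [I1, I2, ← intervalIntegral.integral_add
    (Continuous.intervalIntegrable (by fun_prop) _ _)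
    (Continuous.intervalIntegrable (by fun_prop) _ _)] at I3
  have I4 : (∫ θ in (-(π / 2))..(π / 2),
      ((P (α + β * cos θ, β * sin θ) - P (-(α + β * cos θ), β * sin θ)) * (β * cos θ) +
      (Q (α + β * cos θ, β * sin θ) + Q (-(α + β * cos θ), β * sin θ)) * (β * sin θ))) =
      -(1 / 2 * ∫ θ in (-(π / 2))..(π / 2), β * (α + β * cos θ) * cos θ *
        ((nderiv v (α + β * cos θ, β * sin θ) (cos θ, sin θ)) ^ 2 +
         (nderiv v (-(α + β * cos θ), β * sin θ) (-cos θ, sin θ)) ^ 2)) := by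
    rw [← intervalIntegral.integral_const_mul, ← intervalIntegral.integral_neg]
    apply intervalIntegral.integral_congr
    intro θ hθ
    rw [uIcc_of_le (by linarith)] at hθ
    have hd : ∀ θ : ℝ, HasDerivAt (fun θ => α + β * cos θ) (-(β * sin θ)) θ := fun θ => by
      simpa using ((hasDerivAt_cos θ).const_mul β).const_add α
    have t1 := deriv_zero_of_Icc (by linarith) hθ
      (fun s hs => hD _ (bdry_right hα hβ hs))
      (curve_deriv hv (hd θ) ((hasDerivAt_sin θ).const_mul β))
    have t2 := deriv_zero_of_Icc (by linarith) hθ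
      (fun s hs => hD _ (bdry_left hα hβ hs))
      (curve_deriv hv (hd θ).neg ((hasDerivAt_sin θ).const_mul β))
    have z1 := hD _ (bdry_right hα hβ hθ)
    have z2 := hD _ (bdry_left hα hβ hθ)
    have cs := sin_sq_add_cos_sq θ
    simp only [P, Q, nderiv, z1, z2]
    generalize pdx v (α + β * cos θ, β * sin θ) = a1 at *
    generalize pdy v (α + β * cos θ, β * sin θ) = b1 at *
    generalize pdx v (-(α + β * cos θ), β * sin θ) = a2 at *
    generalize pdy v (-(α + β * cos θ), β * sin θ) = b2 at *
    have t1' : -(sin θ * a1) + cos θ * b1 = 0 := by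
      apply mul_left_cancel₀ hβ.ne'
      linear_combination t1
    have t2' : sin θ * a2 + cos θ * b2 = 0 := by
      apply mul_left_cancel₀ hβ.ne'
      linear_combination t2
    obtain ⟨g1, ea1, eb1⟩ : ∃ g, a1 = cos θ * g ∧ b1 = sin θ * g :=
      ⟨cos θ * a1 + sin θ * b1, by linear_combination -a1 * cs + (-sin θ) * t1',
        by linear_combination -b1 * cs + cos θ * t1'⟩
    obtain ⟨g2, ea2, eb2⟩ : ∃ g, a2 = -cos θ * g ∧ b2 = sin θ * g :=
      ⟨-cos θ * a2 + sin θ * b2, by linear_combination -a2 * cs + sin θ * t2',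
        by linear_combination -b2 * cs + cos θ * t2'⟩
    subst ea1 eb1 ea2 eb2
    have cs' : sin θ ^ 2 = 1 - cos θ ^ 2 := by linarith
    have n1 : cos θ * (cos θ * g1) + sin θ * (sin θ * g1) = g1 := by
      linear_combination g1 * cs
    have n2 : -cos θ * (-cos θ * g2) + sin θ * (sin θ * g2) = g2 := by
      linear_combination g2 * cs
    rw [n1, n2]
    linear_combination (-1 / 2 * β * cos θ * (α + β * cos θ) * (g1 ^ 2 + g2 ^ 2)) * cs
  rw [I4] at I3
  linarith

lemma main_bound {α β l : ℝ} (hα : 0 < α) (hβ : 0 < β) {v : ℝ × ℝ → ℝ}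
    (hv : ContDiff ℝ (⊤ : ℕ∞) v) (hD : ∀ p ∈ StadiumBoundary α β, v p = 0)
    (h1 : ∫ p in Stadium α β, (v p) ^ 2 = 1) :
    1 / (16 * (α + β) ^ 2) ≤
      3 / 2 * (α + β) ^ 2 * (∫ p in Stadium α β, (lap v p - l ^ 2 * v p) ^ 2) +
      (α + β) / (2 * β) * bdryIntW α β (fun p n => (|p.1| - α) * (nderiv v p n) ^ 2) := by
  have hvc := hv.continuous
  have hac := (pdx_smooth hv).continuous
  have hbc := (pdy_smooth hv).continuous
  have haac := (pdx_smooth (pdx_smooth hv)).continuous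
  have hbbc := (pdy_smooth (pdy_smooth hv)).continuous
  have hlc : Continuous (lap v) := by unfold lap; fun_prop
  have hpi := pi_pos
  set M := α + β with hM
  have hMp : 0 < M := by positivity
  have hp := poincare hα hβ hv hD
  have hr := rellich (l := l) hα hβ hv hD
  rw [h1] at hp
  have hfb : ∫ p in Stadium α β, (lap v p - l ^ 2 * v p) * (p.1 * pdx v p + 1 / 2 * v p) ≤
      ∫ p in Stadium α β, (3 / 2 * M ^ 2 * (lap v p - l ^ 2 * v p) ^ 2 +
        1 / 2 * (pdx v p) ^ 2 + 1 / (16 * M ^ 2) * (v p) ^ 2) := by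
    apply setIntegral_mono_on (intS hα hβ (by fun_prop)) (intS hα hβ (by fun_prop))
      (stadium_compact hα hβ).isClosed.measurableSet
    rintro ⟨x, y⟩ hxy
    have hx := ((mem_stadium_hh hα hβ x y).1 hxy).1
    have hx2 : x ^ 2 ≤ M ^ 2 := sq_le_sq' hx.1 hx.2
    simp only
    generalize lap v (x, y) - l ^ 2 * v (x, y) = F
    generalize pdx v (x, y) = a
    generalize v (x, y) = w
    have e1 : F * (x * a) ≤ 1 / 2 * M ^ 2 * F ^ 2 + 1 / 2 * a ^ 2 := by
      nlinarith [sq_nonneg (F * x - a), mul_le_mul_of_nonneg_right hx2 (sq_nonneg F)]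
    have e2 : F * (1 / 2 * w) ≤ M ^ 2 * F ^ 2 + 1 / (16 * M ^ 2) * w ^ 2 := by
      have : M ^ 2 * F ^ 2 + 1 / (16 * M ^ 2) * w ^ 2 - F * (1 / 2 * w) =
        (M * F - 1 / (4 * M) * w) ^ 2 := by field_simp; ring
      nlinarith [sq_nonneg (M * F - 1 / (4 * M) * w)]
    nlinarith
  rw [integral_add (intS hα hβ (by fun_prop)) (intS hα hβ (by fun_prop)),
    integral_add (intS hα hβ (by fun_prop)) (intS hα hβ (by fun_prop)),
    integral_const_mul, integral_const_mul, integral_const_mul, h1] at hfb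
  have hB : 1 / 2 * ∫ θ in (-(π / 2))..(π / 2), β * (α + β * cos θ) * cos θ *
        ((nderiv v (α + β * cos θ, β * sin θ) (cos θ, sin θ)) ^ 2 +
         (nderiv v (-(α + β * cos θ), β * sin θ) (-cos θ, sin θ)) ^ 2) ≤
      M / (2 * β) * bdryIntW α β (fun p n => (|p.1| - α) * (nderiv v p n) ^ 2) := by
    rw [bdryIntW, ← mul_assoc, ← intervalIntegral.integral_const_mul,
      ← intervalIntegral.integral_const_mul]
    apply intervalIntegral.integral_mono_on (by linarith)
    · unfold nderiv
      exact Continuous.intervalIntegrable (by fun_prop) _ _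
    · unfold nderiv
      exact Continuous.intervalIntegrable (by fun_prop) _ _
    intro θ hθ
    have hc := cos_nonneg_of_mem_Icc hθ
    have hc1 := cos_le_one θ
    have hbc : 0 ≤ β * cos θ := by positivity
    simp only [abs_neg]
    rw [abs_of_nonneg (by linarith : 0 ≤ α + β * cos θ)]
    generalize nderiv v (α + β * cos θ, β * sin θ) (cos θ, sin θ) = g1
    generalize nderiv v (-(α + β * cos θ), β * sin θ) (-cos θ, sin θ) = g2
    have e : M / (2 * β) * β = 1 / 2 * M := by field_simp
    rw [e]
    have k1 : α + β * cos θ ≤ M := by nlinarith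
    have k2 : 0 ≤ β * cos θ * (g1 ^ 2 + g2 ^ 2) := by positivity
    nlinarith [mul_le_mul_of_nonneg_right k1 k2]
  have hA : 1 / (4 * M ^ 2) ≤ ∫ p in Stadium α β, (pdx v p) ^ 2 := by
    rw [div_le_iff₀ (by positivity)]
    linarith
  have e4 : 1 / (4 * M ^ 2) = 4 * (1 / (16 * M ^ 2)) := by field_simp; norm_num
  rw [e4] at hA
  linarith

open scoped Manifold Topology in
lemma globalize {α β : ℝ} (hα : 0 < α) (hβ : 0 < β) {u : ℝ × ℝ → ℝ}
    (hu : ∃ V : Set (ℝ × ℝ), IsOpen V ∧ Stadium α β ⊆ V ∧ ContDiffOn ℝ (⊤ : ℕ∞) u V) :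
    ∃ v : ℝ × ℝ → ℝ, ContDiff ℝ (⊤ : ℕ∞) v ∧ ∃ U : Set (ℝ × ℝ), IsOpen U ∧
      Stadium α β ⊆ U ∧ EqOn v u U := by
  obtain ⟨V, hV, hSV, huV⟩ := hu
  obtain ⟨χ, h0, h1, -⟩ := exists_contMDiffMap_zero_one_nhds_of_isClosed 𝓘(ℝ, ℝ × ℝ)
    (n := (⊤ : ℕ∞)) hV.isClosed_compl (stadium_compact hα hβ).isClosed
    (disjoint_compl_left_iff_subset.2 hSV)
  have hχ : ContDiff ℝ (⊤ : ℕ∞) χ := χ.contMDiff.contDiff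
  refine ⟨fun p => χ p * u p, ?_, ?_⟩
  · rw [contDiff_iff_contDiffAt]
    intro p
    by_cases hp : p ∈ V
    · exact hχ.contDiffAt.mul (huV.contDiffAt (hV.mem_nhds hp))
    · have : ∀ᶠ q in 𝓝 p, χ q = 0 := (eventually_nhdsSet_iff_forall.1 h0) p hp
      refine (contDiffAt_const (c := (0:ℝ))).congr_of_eventuallyEq ?_
      filter_upwards [this] with q hq
      simp [hq]
  · obtain ⟨U, hU, hSU, hU1⟩ := mem_nhdsSet_iff_exists.1 h1
    refine ⟨U, hU, hSU, fun p hp => ?_⟩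
    have : χ p = 1 := hU1 hp
    simp [this]

lemma pdx_congr {u v : ℝ × ℝ → ℝ} {U : Set (ℝ × ℝ)} (hU : IsOpen U) (h : EqOn v u U) :
    EqOn (pdx v) (pdx u) U := by
  intro p hp
  apply Filter.EventuallyEq.deriv_eq
  have : (fun t : ℝ => ((t, p.2) : ℝ × ℝ)) ⁻¹' U ∈ nhds p.1 :=
    (hU.preimage (by fun_prop)).mem_nhds (by simpa using hp)
  filter_upwards [this] with t ht using h ht

lemma pdy_congr {u v : ℝ × ℝ → ℝ} {U : Set (ℝ × ℝ)} (hU : IsOpen U) (h : EqOn v u U) :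
    EqOn (pdy v) (pdy u) U := by
  intro p hp
  apply Filter.EventuallyEq.deriv_eq
  have : (fun t : ℝ => ((p.1, t) : ℝ × ℝ)) ⁻¹' U ∈ nhds p.2 :=
    (hU.preimage (by fun_prop)).mem_nhds (by simpa using hp)
  filter_upwards [this] with t ht using h ht

lemma bdry_subset {α β : ℝ} (hα : 0 < α) (hβ : 0 < β) :
    StadiumBoundary α β ⊆ Stadium α β := by
  rintro ⟨x, y⟩ (⟨h1, h2⟩ | ⟨h1, h2⟩)
  · refine Or.inl ⟨abs_le.1 h1, ?_⟩
    rcases h2 with h2 | h2 <;> simp only at h2 <;> subst h2 <;> constructor <;> simp <;> linarith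
  · simp only at h1 h2
    rcases abs_cases x with ⟨h, h'⟩ | ⟨h, h'⟩ <;> rw [h] at h1 h2
    · exact Or.inr (Or.inl ⟨h1.le, h2⟩)
    · refine Or.inr (Or.inr ⟨?_, ?_⟩) <;> simp only <;> nlinarith

lemma datum_bound {α β : ℝ} (hα : 0 < α) (hβ : 0 < β) (d : QMDatum α β)
    (h1 : ∫ p in Stadium α β, (d.u p) ^ 2 = 1) :
    1 / (16 * (α + β) ^ 2) ≤
      3 / 2 * (α + β) ^ 2 * (∫ p in Stadium α β, (d.f p) ^ 2) +
      (α + β) / (2 * β) * bdryIntW α β (fun p n => (|p.1| - α) * (nderiv d.u p n) ^ 2) := by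
  obtain ⟨v, hv, U, hU, hSU, hvu⟩ := globalize hα hβ d.smooth
  have hm := (stadium_compact hα hβ).isClosed.measurableSet
  have hx := pdx_congr hU hvu
  have hy := pdy_congr hU hvu
  have hD : ∀ p ∈ StadiumBoundary α β, v p = 0 := fun p hp => by
    rw [hvu (hSU (bdry_subset hα hβ hp)), d.dirichlet p hp]
  have h1' : ∫ p in Stadium α β, (v p) ^ 2 = 1 := by
    rw [← h1]
    apply setIntegral_congr_fun hm
    intro p hp
    simp only [hvu (hSU hp)]
  have hf : ∫ p in Stadium α β, (lap v p - d.lam ^ 2 * v p) ^ 2 =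
      ∫ p in Stadium α β, (d.f p) ^ 2 := by
    apply setIntegral_congr_fun hm
    intro p hp
    simp only
    rw [← d.eqn p hp, hvu (hSU hp), lap, lap, pdx_congr hU hx (hSU hp), pdy_congr hU hy (hSU hp)]
  have hb : bdryIntW α β (fun p n => (|p.1| - α) * (nderiv v p n) ^ 2) =
      bdryIntW α β (fun p n => (|p.1| - α) * (nderiv d.u p n) ^ 2) := by
    unfold bdryIntW
    congr 1
    apply intervalIntegral.integral_congr
    intro θ hθ
    rw [uIcc_of_le (by linarith [pi_pos])] at hθ
    have m1 := hSU (bdry_subset hα hβ (bdry_right hα hβ hθ))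
    have m2 := hSU (bdry_subset hα hβ (bdry_left hα hβ hθ))
    simp only [nderiv, hx m1, hx m2, hy m1, hy m2]
  have := main_bound (l := d.lam) hα hβ hv hD h1'
  rwa [hf, hb] at this

/-- There is `C > 0` depending only on `α, β` such that for every sequence of
real Dirichlet quasimode data with `‖u_k‖_{L²(S)} = 1`, `λ_k → ∞` and `‖f_k‖_{L²(S)} → 0`
(an `o(1)` quasimode), one has `∫_{∂S ∩ W} w |∂_N u_k|² dl ≥ C` for all large `k`. -/
theorem stmt3 (α β : ℝ) (hα : 0 < α) (hβ : 0 < β) :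
    ∃ C > 0, ∀ d : ℕ → QMDatum α β,
      (∀ k, (∫ p in Stadium α β, ((d k).u p) ^ 2) = 1) →
      Tendsto (fun k => (d k).lam) atTop atTop →
      Tendsto (fun k => Real.sqrt (∫ p in Stadium α β, ((d k).f p) ^ 2)) atTop (nhds 0) →
      ∀ᶠ k in atTop,
        bdryIntW α β (fun p n => (|p.1| - α) * (nderiv (d k).u p n) ^ 2) ≥ C := by
  have hM : 0 < α + β := by positivity
  refine ⟨1 / (32 * (α + β) ^ 2) / ((α + β) / (2 * β)), by positivity, ?_⟩
  intro d h1 _ hf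
  have hf2 : Tendsto (fun k => 3 / 2 * (α + β) ^ 2 *
      (Real.sqrt (∫ p in Stadium α β, ((d k).f p) ^ 2)) ^ 2) atTop (nhds 0) := by
    simpa using (hf.pow 2).const_mul (3 / 2 * (α + β) ^ 2)
  have hev := hf2.eventually_lt_const (show 0 < 1 / (32 * (α + β) ^ 2) by positivity)
  filter_upwards [hev] with k hk
  have hb := datum_bound hα hβ (d k) (h1 k)
  rw [Real.sq_sqrt (integral_nonneg fun p => sq_nonneg _)] at hk
  have e : 1 / (16 * (α + β) ^ 2) = 2 * (1 / (32 * (α + β) ^ 2)) := by field_simp; norm_num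
  rw [ge_iff_le, div_le_iff₀ (by positivity)]
  rw [e] at hb
  linarith
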